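/- arXiv:math/0508421 — 2 statements merged into one kernel-verified Lean document; each statement's English description precedes it below -/
import Mathlib

section
/- For every binary quintic F over ℂ written as F(x) = (xλ₁)(xλ₂)(xλ₃)(xλ₄)(xλ₅), one has B₀(F) = 2^{−40}·Disc(F)³. -/
/-!
For a quartic with homogeneous roots `a, b, c, d`, put `A = (ab)(cd)`, `B = (ac)(db)`,
`C = (ad)(bc)`. Then `24 S = A² + B² + C²` and `432 T = (A - B)(B - C)(C - A)`, while the Plücker
relation gives `A + B + C = 0`; hence `256 (S³ - 27 T²) = (ABC)²` is the discriminant of the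
quartic (`discr_lin`). The invariant `B₀` is the product of the leading coefficients of the five
linear factors, so it is `256⁻⁵ = 2⁻⁴⁰` times the product of the discriminants of the quartics
`Qᵢ`. Each bracket `(λᵢλⱼ)` survives in exactly three of these quartics, which gives the cube.
-/

noncomputable section

open MvPolynomial

abbrev P2 := MvPolynomial (Fin 2) ℂ

/-- The bracket `(bc) = b₁c₂ − b₂c₁` of two points of `ℂ²`. -/
def br (b c : Fin 2 → ℂ) : ℂ := b 0 * c 1 - b 1 * c 0

/-- The linear binary form `(xλ) = x₁λ₂ − x₂λ₁` with homogeneous root `λ`. -/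
def lin (l : Fin 2 → ℂ) : P2 := C (l 1) * X 0 - C (l 0) * X 1

/-- The binary quintic with homogeneous roots `λ₁,…,λ₅`. -/
def quinticOf (l : Fin 5 → Fin 2 → ℂ) : P2 := ∏ i, lin (l i)

/-- The binary quartic obtained from the quintic with roots `λ₁,…,λ₅` by
omitting the `i`-th factor. -/
def quarticOmit (l : Fin 5 → Fin 2 → ℂ) (i : Fin 5) : P2 :=
  ∏ j ∈ Finset.univ.erase i, lin (l j)

/-- The binary quartic with homogeneous roots `ξ₁,…,ξ₄`. -/
def quarticOf (l : Fin 4 → Fin 2 → ℂ) : P2 := ∏ i, lin (l i)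

/-- The coefficient of `x₁^i x₂^j` in a binary form. -/
def mcoeff (i j : ℕ) (F : P2) : ℂ :=
  MvPolynomial.coeff (Finsupp.single 0 i + Finsupp.single 1 j) F

/-- The invariant `S = q₀q₄ − 4q₁q₃ + 3q₂²` of a binary quartic
`Q = q₀x₁⁴ + 4q₁x₁³x₂ + 6q₂x₁²x₂² + 4q₃x₁x₂³ + q₄x₂⁴`. -/
def Sq (Q : P2) : ℂ :=
  mcoeff 4 0 Q * mcoeff 0 4 Q - 4 * (mcoeff 3 1 Q / 4) * (mcoeff 1 3 Q / 4)
    + 3 * (mcoeff 2 2 Q / 6) ^ 2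

/-- The invariant `T = q₀q₂q₄ + 2q₁q₂q₃ − q₂³ − q₀q₃² − q₁²q₄` of a binary quartic. -/
def Tq (Q : P2) : ℂ :=
  mcoeff 4 0 Q * (mcoeff 2 2 Q / 6) * mcoeff 0 4 Q
    + 2 * (mcoeff 3 1 Q / 4) * (mcoeff 2 2 Q / 6) * (mcoeff 1 3 Q / 4)
    - (mcoeff 2 2 Q / 6) ^ 3 - mcoeff 4 0 Q * (mcoeff 1 3 Q / 4) ^ 2
    - (mcoeff 3 1 Q / 4) ^ 2 * mcoeff 0 4 Q

/-- The quintic `R̄ = ∏ᵢ ((S(Qᵢ)³ − 27T(Qᵢ)²)z − S(Qᵢ)³)` in the variable `z`. -/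
def Rbar (l : Fin 5 → Fin 2 → ℂ) : Polynomial ℂ :=
  ∏ i : Fin 5,
    (Polynomial.C (Sq (quarticOmit l i) ^ 3 - 27 * Tq (quarticOmit l i) ^ 2) * Polynomial.X
      - Polynomial.C (Sq (quarticOmit l i) ^ 3))

/-- The invariant `Bᵢ`, defined by `R̄ = Σᵢ Bᵢ z^(5−i)`. -/
def Binv (l : Fin 5 → Fin 2 → ℂ) (i : ℕ) : ℂ := (Rbar l).coeff (5 - i)

/-- Partial derivative of a binary form. -/
def pd (i : Fin 2) (F : P2) : P2 := MvPolynomial.pderiv i F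

/-- The `k`-th transvectant of binary forms `F`, `G` of orders `p`, `q`. -/
def transv (p q k : ℕ) (F G : P2) : P2 :=
  C ((Nat.factorial (p - k) * Nat.factorial (q - k) : ℂ)
      / (Nat.factorial p * Nat.factorial q)) *
  ∑ i ∈ Finset.range (k + 1),
    C ((-1 : ℂ) ^ i * (Nat.choose k i : ℂ)) *
      ((pd 1)^[i] ((pd 0)^[k - i] F)) * ((pd 0)^[i] ((pd 1)^[k - i] G))

/-- The covariant `C₁ = (F,F)₄` of a binary quintic. -/
def cov1 (F : P2) : P2 := transv 5 5 4 F F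
/-- The covariant `C₂ = (F,C₁)₂` of a binary quintic. -/
def cov2 (F : P2) : P2 := transv 5 2 2 F (cov1 F)
/-- The covariant `C₃ = (C₂,C₂)₂` of a binary quintic. -/
def cov3 (F : P2) : P2 := transv 3 3 2 (cov2 F) (cov2 F)
/-- The covariant `C₄ = (C₂,C₁)₂` of a binary quintic. -/
def cov4 (F : P2) : P2 := transv 3 2 2 (cov2 F) (cov1 F)

/-- The degree `4` invariant `J = −½(C₁,C₁)₂` of a binary quintic. -/
def Jinv (F : P2) : ℂ := -(1/2) * constantCoeff (transv 2 2 2 (cov1 F) (cov1 F))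
/-- The degree `8` invariant `K = ⅛(C₁,C₃)₂` of a binary quintic. -/
def Kinv (F : P2) : ℂ := (1/8) * constantCoeff (transv 2 2 2 (cov1 F) (cov3 F))
/-- The degree `12` invariant `L = (1/96)(C₃,C₃)₂` of a binary quintic. -/
def Linv (F : P2) : ℂ := (1/96) * constantCoeff (transv 2 2 2 (cov3 F) (cov3 F))
/-- The degree `18` invariant `H = −(1/384)((C₄,C₃)₁,(C₁,C₄)₁)₁` of a binary quintic. -/
def Hinv (F : P2) : ℂ :=
  -(1/384) *
    constantCoeff (transv 1 1 1 (transv 1 2 1 (cov4 F) (cov3 F)) (transv 2 1 1 (cov1 F) (cov4 F)))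

/-- The coefficients `a₀,…,a₅` of a binary quintic `F = Σ aᵢ x₁^(5−i) x₂^i`. -/
def qcoeffs (F : P2) : Fin 6 → ℂ := fun i => mcoeff (5 - (i : ℕ)) (i : ℕ) F

/-- The binary quintic with coefficients `a₀,…,a₅`. -/
def formOf (a : Fin 6 → ℂ) : P2 := ∑ i : Fin 6, C (a i) * X 0 ^ (5 - (i : ℕ)) * X 1 ^ (i : ℕ)

/-- The `GL₂(ℂ)` action on binary forms, `(gF)(x) = F(g⁻¹x)`. -/
def act (g : Matrix.GeneralLinearGroup (Fin 2) ℂ) (F : P2) : P2 :=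
  aeval (fun i => ∑ j,
    C (((g⁻¹ : Matrix.GeneralLinearGroup (Fin 2) ℂ) : Matrix (Fin 2) (Fin 2) ℂ) i j) * X j) F

/-- The `SL₂(ℂ)` action on binary forms, `(gF)(x) = F(g⁻¹x)`. -/
def actSL (g : Matrix.SpecialLinearGroup (Fin 2) ℂ) (F : P2) : P2 :=
  aeval (fun i => ∑ j,
    C (((g⁻¹ : Matrix.SpecialLinearGroup (Fin 2) ℂ) : Matrix (Fin 2) (Fin 2) ℂ) i j) * X j) F

/-- `P` (a polynomial in the coefficients `a₀,…,a₅` of a binary quintic) is an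
`SL₂(ℂ)`-invariant: `P(gF) = P(F)` for all `g ∈ SL₂(ℂ)`. -/
def IsInvariantPoly (P : MvPolynomial (Fin 6) ℂ) : Prop :=
  ∀ (g : Matrix.SpecialLinearGroup (Fin 2) ℂ) (a : Fin 6 → ℂ),
    MvPolynomial.eval (qcoeffs (actSL g (formOf a))) P = MvPolynomial.eval a P

/-- The discriminant `∏_{i<j} (λᵢλⱼ)²` of a binary quintic with roots `λ₁,…,λ₅`. -/
def disc5 (l : Fin 5 → Fin 2 → ℂ) : ℂ := ∏ i, ∏ j ∈ Finset.Ioi i, br (l i) (l j) ^ 2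

/-- The discriminant `∏_{i<j} (ξᵢξⱼ)²` of a binary quartic with roots `ξ₁,…,ξ₄`. -/
def disc4 (l : Fin 4 → Fin 2 → ℂ) : ℂ := ∏ i, ∏ j ∈ Finset.Ioi i, br (l i) (l j) ^ 2

/-- The Sylvester canonical form `u x₁⁵ + v x₂⁵ − w (x₁+x₂)⁵`. -/
def sylvester (u v w : ℂ) : P2 := C u * X 0 ^ 5 + C v * X 1 ^ 5 - C w * (X 0 + X 1) ^ 5

/-- The submodule of `SL₂(ℂ)`-invariant polynomials in the coefficients of the
binary quintic. -/
def invariantSubmodule : Submodule ℂ (MvPolynomial (Fin 6) ℂ) :=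
  ⨅ (g : Matrix.SpecialLinearGroup (Fin 2) ℂ), ⨅ (a : Fin 6 → ℂ),
    LinearMap.ker
      ((aeval (R := ℂ) (qcoeffs (actSL g (formOf a)))).toLinearMap
        - (aeval (R := ℂ) a).toLinearMap)


/-- The binary quartic with coefficients `e₀,…,e₄` (no binomial factors). -/
def quarticCoeffs (e₀ e₁ e₂ e₃ e₄ : ℂ) : P2 :=
  monomial (Finsupp.single 0 4 + Finsupp.single 1 0) e₀
    + monomial (Finsupp.single 0 3 + Finsupp.single 1 1) e₁
    + monomial (Finsupp.single 0 2 + Finsupp.single 1 2) e₂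
    + monomial (Finsupp.single 0 1 + Finsupp.single 1 3) e₃
    + monomial (Finsupp.single 0 0 + Finsupp.single 1 4) e₄

lemma exponent_eq_iff (i j m n : ℕ) :
    (Finsupp.single (0 : Fin 2) i + Finsupp.single 1 j = Finsupp.single 0 m + Finsupp.single 1 n)
      ↔ i = m ∧ j = n := by
  constructor
  · intro h
    have h0 := DFunLike.congr_fun h 0
    have h1 := DFunLike.congr_fun h 1
    simp at h0 h1
    exact ⟨h0, h1⟩
  · rintro ⟨rfl, rfl⟩; rfl

lemma mcoeff_quarticCoeffs (e₀ e₁ e₂ e₃ e₄ : ℂ) :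
    mcoeff 4 0 (quarticCoeffs e₀ e₁ e₂ e₃ e₄) = e₀ ∧
    mcoeff 3 1 (quarticCoeffs e₀ e₁ e₂ e₃ e₄) = e₁ ∧
    mcoeff 2 2 (quarticCoeffs e₀ e₁ e₂ e₃ e₄) = e₂ ∧
    mcoeff 1 3 (quarticCoeffs e₀ e₁ e₂ e₃ e₄) = e₃ ∧
    mcoeff 0 4 (quarticCoeffs e₀ e₁ e₂ e₃ e₄) = e₄ := by
  refine ⟨?_, ?_, ?_, ?_, ?_⟩ <;>
  · simp only [mcoeff, quarticCoeffs, coeff_add, coeff_monomial, exponent_eq_iff]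
    norm_num

lemma monomial_eq_C_mul (i j : ℕ) (e : ℂ) :
    (monomial (Finsupp.single 0 i + Finsupp.single 1 j) e : P2) = C e * X 0 ^ i * X 1 ^ j := by
  rw [X_pow_eq_monomial, X_pow_eq_monomial, C_mul_monomial, monomial_mul]
  simp

lemma lin_mul_eq (a b c d : Fin 2 → ℂ) :
    lin a * (lin b * (lin c * lin d)) = quarticCoeffs
      (a 1 * b 1 * c 1 * d 1)
      (-(a 0 * b 1 * c 1 * d 1 + a 1 * b 0 * c 1 * d 1 + a 1 * b 1 * c 0 * d 1
        + a 1 * b 1 * c 1 * d 0))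
      (a 0 * b 0 * c 1 * d 1 + a 0 * b 1 * c 0 * d 1 + a 0 * b 1 * c 1 * d 0
        + a 1 * b 0 * c 0 * d 1 + a 1 * b 0 * c 1 * d 0 + a 1 * b 1 * c 0 * d 0)
      (-(a 1 * b 0 * c 0 * d 0 + a 0 * b 1 * c 0 * d 0 + a 0 * b 0 * c 1 * d 0
        + a 0 * b 0 * c 0 * d 1))
      (a 0 * b 0 * c 0 * d 0) := by
  simp only [lin, quarticCoeffs, monomial_eq_C_mul, map_add, map_mul, map_neg]
  ring

/-- `S` in terms of the three products of complementary brackets. -/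
lemma Sq_lin (a b c d : Fin 2 → ℂ) :
    Sq (lin a * (lin b * (lin c * lin d))) =
      ((br a b * br c d) ^ 2 + (br a c * br d b) ^ 2 + (br a d * br b c) ^ 2) / 24 := by
  rw [lin_mul_eq]
  obtain ⟨h0, h1, h2, h3, h4⟩ := mcoeff_quarticCoeffs _ _ _ _ _
  rw [Sq, h0, h1, h2, h3, h4]
  simp only [br]
  ring

/-- `T` is, up to a constant, the product of the differences of the three products of
complementary brackets. -/
lemma Tq_lin (a b c d : Fin 2 → ℂ) :
    Tq (lin a * (lin b * (lin c * lin d))) =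
      (br a b * br c d - br a c * br d b) * (br a c * br d b - br a d * br b c)
        * (br a d * br b c - br a b * br c d) / 432 := by
  rw [lin_mul_eq]
  obtain ⟨h0, h1, h2, h3, h4⟩ := mcoeff_quarticCoeffs _ _ _ _ _
  rw [Tq, h0, h1, h2, h3, h4]
  simp only [br]
  ring

/-- The discriminant of a quartic is `256 (S³ − 27T²)`. With `A`, `B`, `C` the three products of
complementary brackets, the Plücker relation `A + B + C = 0` reduces this to the discriminant
formula for a cubic with roots `A`, `B`, `C`. -/
lemma discr_lin (a b c d : Fin 2 → ℂ) :
    Sq (lin a * (lin b * (lin c * lin d))) ^ 3 - 27 * Tq (lin a * (lin b * (lin c * lin d))) ^ 2 =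
      (br a b * br a c * br a d * br b c * br b d * br c d) ^ 2 / 256 := by
  have hdb : br d b = -br b d := by simp only [br]; ring
  have plucker : br a d * br b c = -(br a b * br c d) - br a c * br d b := by
    simp only [br]; ring
  have hprod : (br a b * br a c * br a d * br b c * br b d * br c d) ^ 2 =
      ((br a b * br c d) * (br a c * br d b) * (br a d * br b c)) ^ 2 := by
    rw [hdb]; ring
  rw [Sq_lin, Tq_lin, hprod, plucker]
  ring

/-- The top coefficient of a product of five linear polynomials. -/
lemma coeff_five_prod_linear (u v : Fin 5 → ℂ) :
    (∏ i, (Polynomial.C (u i) * Polynomial.X - Polynomial.C (v i))).coeff 5 = ∏ i, u i := by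
  have h := Polynomial.coeff_prod_of_natDegree_le (s := Finset.univ)
    (fun i : Fin 5 => Polynomial.C (u i) * Polynomial.X - Polynomial.C (v i)) 1
    (fun i _ => by compute_degree)
  simpa using h

/-- `B₀(F) = 2⁻⁴⁰ Disc(F)³` for a binary quintic `F`. -/
theorem binv_zero_eq_disc_cubed (l : Fin 5 → Fin 2 → ℂ) :
    Binv l 0 = ((2 : ℂ) ^ 40)⁻¹ * disc5 l ^ 3 := by
  have e0 : quarticOmit l 0 = lin (l 1) * (lin (l 2) * (lin (l 3) * lin (l 4))) := by
    rw [quarticOmit, show (Finset.univ.erase 0 : Finset (Fin 5)) = {1, 2, 3, 4} by decide]; simp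
  have e1 : quarticOmit l 1 = lin (l 0) * (lin (l 2) * (lin (l 3) * lin (l 4))) := by
    rw [quarticOmit, show (Finset.univ.erase 1 : Finset (Fin 5)) = {0, 2, 3, 4} by decide]; simp
  have e2 : quarticOmit l 2 = lin (l 0) * (lin (l 1) * (lin (l 3) * lin (l 4))) := by
    rw [quarticOmit, show (Finset.univ.erase 2 : Finset (Fin 5)) = {0, 1, 3, 4} by decide]; simp
  have e3 : quarticOmit l 3 = lin (l 0) * (lin (l 1) * (lin (l 2) * lin (l 4))) := by
    rw [quarticOmit, show (Finset.univ.erase 3 : Finset (Fin 5)) = {0, 1, 2, 4} by decide]; simp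
  have e4 : quarticOmit l 4 = lin (l 0) * (lin (l 1) * (lin (l 2) * lin (l 3))) := by
    rw [quarticOmit, show (Finset.univ.erase 4 : Finset (Fin 5)) = {0, 1, 2, 3} by decide]; simp
  have hd : disc5 l = (br (l 0) (l 1) * br (l 0) (l 2) * br (l 0) (l 3) * br (l 0) (l 4)
      * br (l 1) (l 2) * br (l 1) (l 3) * br (l 1) (l 4)
      * br (l 2) (l 3) * br (l 2) (l 4) * br (l 3) (l 4)) ^ 2 := by
    rw [disc5, Fin.prod_univ_five,
      show Finset.Ioi (0 : Fin 5) = {1, 2, 3, 4} by decide,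
      show Finset.Ioi (1 : Fin 5) = {2, 3, 4} by decide,
      show Finset.Ioi (2 : Fin 5) = {3, 4} by decide,
      show Finset.Ioi (3 : Fin 5) = {4} by decide,
      show Finset.Ioi (4 : Fin 5) = ∅ by decide]
    simp
    ring
  rw [Binv, Rbar, coeff_five_prod_linear, Fin.prod_univ_five, e0, e1, e2, e3, e4, hd]
  simp only [discr_lin]
  ring

end
end

section
/- For the binary quintic in Sylvester canonical form F(x₁,x₂) = u·x₁⁵ + v·x₂⁵ − w·(x₁+x₂)⁵ with u, v, w ∈ ℂ, one has K(F) = u²v²w²·(uv + uw + vw). -/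
/-! Write `z = x₁ + x₂`. On powers of linear forms a transvectant is given by brackets,
`(l⁵, m⁵)₄ = [lm]⁴ l m` and `(l⁵, Q)₂ = Q(root of l) l³`. For `F = u x₁⁵ + v x₂⁵ - w z⁵` this gives
`C₁ = 2(uv x₁x₂ - uw x₁z - vw x₂z)`, and then `C₂` is a multiple of `x₁³ + x₂³ - z³ = -3 x₁x₂z`;
so `C₂ = 6uvw x₁x₂z`, and `C₃ = -8u²v²w²(x₁² + x₁x₂ + x₂²)` is essentially the Hessian of `C₂`.
Pairing `C₁` with `C₃` gives `K`. The lemmas `cov1_sylvester`, `cov2_sylvester`, `cov3_sylvester`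
establish these closed forms by differentiating monomial expansions and comparing values
at every point of `ℂ²`. -/

noncomputable section

open MvPolynomial

lemma pd_zero_monomial (a : ℂ) (m n : ℕ) :
    pd 0 (C a * X 0 ^ m * X 1 ^ n) = C (a * m) * X 0 ^ (m - 1) * X 1 ^ n := by
  simp [pd, Derivation.leibniz, Derivation.leibniz_pow, pderiv_X]
  ring

lemma pd_one_monomial (a : ℂ) (m n : ℕ) :
    pd 1 (C a * X 0 ^ m * X 1 ^ n) = C (a * n) * X 0 ^ m * X 1 ^ (n - 1) := by
  simp [pd, Derivation.leibniz, Derivation.leibniz_pow, pderiv_X]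
  ring

lemma pd_add (i : Fin 2) (F G : P2) : pd i (F + G) = pd i F + pd i G :=
  map_add _ F G

lemma sylvester_expand (u v w : ℂ) :
    sylvester u v w =
      C (u - w) * X 0 ^ 5 * X 1 ^ 0 + C (-5 * w) * X 0 ^ 4 * X 1 ^ 1
        + C (-10 * w) * X 0 ^ 3 * X 1 ^ 2 + C (-10 * w) * X 0 ^ 2 * X 1 ^ 3
        + C (-5 * w) * X 0 ^ 1 * X 1 ^ 4 + C (v - w) * X 0 ^ 0 * X 1 ^ 5 := by
  refine MvPolynomial.funext fun x => ?_
  simp [sylvester]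
  ring

lemma cov1_sylvester (u v w : ℂ) :
    cov1 (sylvester u v w) =
      C (-2 * u * w) * X 0 ^ 2 * X 1 ^ 0 + C (2 * (u * v - u * w - v * w)) * X 0 ^ 1 * X 1 ^ 1
        + C (-2 * v * w) * X 0 ^ 0 * X 1 ^ 2 := by
  refine MvPolynomial.funext fun x => ?_
  simp only [cov1, transv, sylvester_expand, Finset.sum_range_succ, Finset.sum_range_zero,
    Function.iterate_succ, Function.iterate_zero, Function.comp, id, pd_add, pd_zero_monomial,
    pd_one_monomial, Nat.reduceSub]
  simp [Nat.factorial, Nat.choose]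
  ring

lemma cov2_sylvester (u v w : ℂ) :
    cov2 (sylvester u v w) =
      C (6 * u * v * w) * X 0 ^ 2 * X 1 ^ 1 + C (6 * u * v * w) * X 0 ^ 1 * X 1 ^ 2 := by
  refine MvPolynomial.funext fun x => ?_
  rw [cov2, cov1_sylvester, sylvester_expand]
  simp only [transv, Finset.sum_range_succ, Finset.sum_range_zero,
    Function.iterate_succ, Function.iterate_zero, Function.comp, id, pd_add, pd_zero_monomial,
    pd_one_monomial, Nat.reduceSub]
  simp [Nat.factorial, Nat.choose]
  ring

lemma cov3_sylvester (u v w : ℂ) :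
    cov3 (sylvester u v w) =
      C (-8 * u ^ 2 * v ^ 2 * w ^ 2) * X 0 ^ 2 * X 1 ^ 0
        + C (-8 * u ^ 2 * v ^ 2 * w ^ 2) * X 0 ^ 1 * X 1 ^ 1
        + C (-8 * u ^ 2 * v ^ 2 * w ^ 2) * X 0 ^ 0 * X 1 ^ 2 := by
  refine MvPolynomial.funext fun x => ?_
  rw [cov3, cov2_sylvester]
  simp only [transv, Finset.sum_range_succ, Finset.sum_range_zero,
    Function.iterate_succ, Function.iterate_zero, Function.comp, id, pd_add, pd_zero_monomial,
    pd_one_monomial, Nat.reduceSub]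
  simp [Nat.factorial, Nat.choose]
  ring

/-- `K = u²v²w²(uv + uw + vw)` on the Sylvester canonical form. -/
theorem kinv_sylvester (u v w : ℂ) :
    Kinv (sylvester u v w) = u ^ 2 * v ^ 2 * w ^ 2 * (u * v + u * w + v * w) := by
  rw [Kinv, cov1_sylvester, cov3_sylvester]
  simp only [transv, Finset.sum_range_succ, Finset.sum_range_zero,
    Function.iterate_succ, Function.iterate_zero, Function.comp, id, pd_add, pd_zero_monomial,
    pd_one_monomial, Nat.reduceSub]
  simp [Nat.factorial, Nat.choose]
  ring

end
end
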